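/- Let a ≥ 2 be a real number and take t_i = (i+a)/a in GFPGM (the method FPGM-a); these t_i satisfy t_i > 0 and t_i² ≤ T_i. Then for every N ≥ 1, F(x_N) − F(x_*) ≤ a L R² / (N(N + 2a − 1)). -/

import Mathlib

/-!
The proof is a Lyapunov argument. Write `F = f + φ`. The descent lemma for `f`, the gradient
inequality for `f` and first-order optimality in the proximal subproblem combine to
`F (p y) + L/2 ‖p y - y‖² + L ⟪y - z, p y - y⟫ ≤ F z` for all `z` (`prox_grad_ineq`).

Let `z_0 = x_0` and `z_{i+1} = z_i + t_i (x_{i+1} - y_i)`. The GFPGM recursion is equivalent to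
`T_i y_i = t_i z_i + (T_i - t_i) x_i`. Adding the inequality above at `z = x_*` with weight `t_i`
and at `z = x_i` with weight `T_i - t_i = T_{i-1}`, and using `t_i² ≤ T_i`, shows that
`T_{i-1} (F x_i - F x_*) + L/2 ‖z_i - x_*‖²` is nonincreasing (`gfpgm_step`). Hence
`F x_N - F x_* ≤ L R² / (2 T_{N-1})`, and `T_{N-1} = N (N + 2a - 1) / (2a)` for FPGM-a.
-/

open scoped RealInnerProductSpace

section

variable {E : Type*} [NormedAddCommGroup E] [InnerProductSpace ℝ E]

lemma hasDerivAt_along_line {f : E → ℝ} {f' : E → E}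
    (hgrad : ∀ z : E, HasFDerivAt f (innerSL ℝ (f' z)) z) (y v : E) (s : ℝ) :
    HasDerivAt (fun s : ℝ => f (y + s • v)) ⟪f' (y + s • v), v⟫ s := by
  have h1 : HasDerivAt (fun s : ℝ => y + s • v) v s := by
    simpa using ((hasDerivAt_id s).smul_const v).const_add y
  exact (hgrad (y + s • v)).comp_hasDerivAt s h1

lemma gradient_ineq {f : E → ℝ} {f' : E → E} (hf : ConvexOn ℝ Set.univ f)
    (hgrad : ∀ z : E, HasFDerivAt f (innerSL ℝ (f' z)) z) (y z : E) :
    f y + ⟪f' y, z - y⟫ ≤ f z := by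
  have hc : ConvexOn ℝ Set.univ (fun s : ℝ => f (y + s • (z - y))) := by
    have := hf.comp_affineMap (AffineMap.lineMap y z : ℝ →ᵃ[ℝ] E)
    simpa [Function.comp_def, AffineMap.lineMap_apply, add_comm] using this
  have hd := hasDerivAt_along_line hgrad y (z - y) 0
  have := hc.le_slope_of_hasDerivAt (Set.mem_univ 0) (Set.mem_univ 1) one_pos hd
  simp [slope_def_field] at this
  linarith

lemma descent_lemma {L : ℝ} {f : E → ℝ} {f' : E → E}
    (hgrad : ∀ z : E, HasFDerivAt f (innerSL ℝ (f' z)) z)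
    (hLip : ∀ u v : E, ‖f' u - f' v‖ ≤ L * ‖u - v‖) (y z : E) :
    f z ≤ f y + ⟪f' y, z - y⟫ + L / 2 * ‖z - y‖ ^ 2 := by
  set v := z - y with hv
  have hd : ∀ s : ℝ, HasDerivAt
      (fun s : ℝ => f (y + s • v) - s * ⟪f' y, v⟫ - L / 2 * ‖v‖ ^ 2 * s ^ 2)
      (⟪f' (y + s • v), v⟫ - ⟪f' y, v⟫ - L / 2 * ‖v‖ ^ 2 * (2 * s)) s := by
    intro s
    have h2 : HasDerivAt (fun s : ℝ => s * ⟪f' y, v⟫) ⟪f' y, v⟫ s := by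
      simpa using (hasDerivAt_id s).mul_const ⟪f' y, v⟫
    have h3 : HasDerivAt (fun s : ℝ => L / 2 * ‖v‖ ^ 2 * s ^ 2) (L / 2 * ‖v‖ ^ 2 * (2 * s)) s := by
      simpa using (hasDerivAt_pow 2 s).const_mul (L / 2 * ‖v‖ ^ 2)
    exact ((hasDerivAt_along_line hgrad y v s).sub h2).sub h3
  have hanti : AntitoneOn
      (fun s : ℝ => f (y + s • v) - s * ⟪f' y, v⟫ - L / 2 * ‖v‖ ^ 2 * s ^ 2) (Set.Icc 0 1) := by
    apply antitoneOn_of_deriv_nonpos (convex_Icc 0 1)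
    · exact fun s _ => (hd s).continuousAt.continuousWithinAt
    · exact fun s _ => (hd s).differentiableAt.differentiableWithinAt
    · intro s hs
      rw [interior_Icc] at hs
      rw [(hd s).deriv, ← inner_sub_left]
      have h1 := real_inner_le_norm (f' (y + s • v) - f' y) v
      have h2 := hLip (y + s • v) y
      rw [add_sub_cancel_left, norm_smul, Real.norm_eq_abs, abs_of_pos hs.1] at h2
      have h3 := mul_le_mul_of_nonneg_right h2 (norm_nonneg v)
      nlinarith
  have := hanti (Set.left_mem_Icc.2 zero_le_one) (Set.right_mem_Icc.2 zero_le_one) zero_le_one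
  simp [hv] at this
  simp only [hv]
  linarith

/-- First-order optimality of the minimizer `q` of the proximal subproblem, in variational form:
`-(g + L (q - y))` is a subgradient of `φ` at `q`. -/
lemma prox_optimality {L : ℝ} {φ : E → ℝ} (hφ : ConvexOn ℝ Set.univ φ) {c : ℝ} {g y q : E}
    (hq : IsMinOn (fun z => c + ⟪g, z - y⟫ + L / 2 * ‖z - y‖ ^ 2 + φ z) Set.univ q) (z : E) :
    0 ≤ ⟪g, z - q⟫ + L * ⟪q - y, z - q⟫ + φ z - φ q := by
  set A := ⟪g, z - q⟫ + L * ⟪q - y, z - q⟫ + φ z - φ q with hA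
  set B := L / 2 * ‖z - q‖ ^ 2 with hB
  -- Minimality of `q` tested against the point `q + s (z - q)` of the segment.
  have key : ∀ s : ℝ, 0 < s → s < 1 → 0 ≤ A + s * B := by
    intro s hs0 hs1
    have h1 := isMinOn_iff.1 hq (q + s • (z - q)) (Set.mem_univ _)
    have h2 := hφ.2 (Set.mem_univ q) (Set.mem_univ z) (by linarith : 0 ≤ 1 - s) hs0.le (by ring)
    have e : (1 - s) • q + s • z = q + s • (z - q) := by module
    rw [e] at h2
    simp only [smul_eq_mul] at h2
    have e2 : q + s • (z - q) - y = (q - y) + s • (z - q) := by module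
    simp only [e2, norm_add_sq_real, inner_add_right, inner_smul_right, norm_smul, mul_pow,
      Real.norm_eq_abs, sq_abs] at h1
    have h3 : 0 ≤ s * (A + s * B) := by
      rw [hA, hB]
      nlinarith
    exact nonneg_of_mul_nonneg_right h3 hs0
  have hlim : Filter.Tendsto (fun s : ℝ => A + s * B) (nhdsWithin 0 (Set.Ioi 0)) (nhds A) := by
    have : Continuous (fun s : ℝ => A + s * B) := by fun_prop
    simpa using (this.tendsto 0).mono_left nhdsWithin_le_nhds
  refine ge_of_tendsto hlim ?_
  filter_upwards [Ioo_mem_nhdsGT (zero_lt_one' ℝ)] with s hs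
  exact key s hs.1 hs.2

/-- The basic inequality of the proximal gradient map, with `q = p y`. -/
lemma prox_grad_ineq {L : ℝ} {f : E → ℝ} {f' : E → E} {φ : E → ℝ}
    (hf : ConvexOn ℝ Set.univ f)
    (hgrad : ∀ z : E, HasFDerivAt f (innerSL ℝ (f' z)) z)
    (hLip : ∀ u v : E, ‖f' u - f' v‖ ≤ L * ‖u - v‖)
    (hφ : ConvexOn ℝ Set.univ φ) {y q : E}
    (hq : IsMinOn (fun z => f y + ⟪f' y, z - y⟫ + L / 2 * ‖z - y‖ ^ 2 + φ z) Set.univ q) (z : E) :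
    f q + φ q + L / 2 * ‖q - y‖ ^ 2 + L * ⟪y - z, q - y⟫ ≤ f z + φ z := by
  have h1 := gradient_ineq hf hgrad y z
  have h2 := descent_lemma hgrad hLip y q
  have h3 := prox_optimality hφ hq z
  have e1 : ⟪f' y, z - y⟫ = ⟪f' y, z - q⟫ + ⟪f' y, q - y⟫ := by
    rw [← inner_add_right]; congr 1; abel
  have e2 : ⟪q - y, z - q⟫ = - ⟪y - z, q - y⟫ - ‖q - y‖ ^ 2 := by
    rw [← real_inner_self_eq_norm_sq, real_inner_comm (q - y) (y - z), ← inner_neg_right,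
      ← inner_sub_right]
    congr 1; abel
  rw [e2] at h3
  linarith

/-- One step of the Lyapunov argument, with `τ = t_i`, `S = T_i`, `F : E → ℝ` the cost, `u = x_i`,
`y = y_i`, `q = x_{i+1}` and `z = z_i`. -/
lemma gfpgm_step {L τ S : ℝ} (hL : 0 < L) (hτ : 0 < τ) (hS : τ ≤ S) (hτS : τ ^ 2 ≤ S)
    {F : E → ℝ} {u y q z xs : E}
    (hF : ∀ w, F q + L / 2 * ‖q - y‖ ^ 2 + L * ⟪y - w, q - y⟫ ≤ F w)
    (hz : S • y = τ • z + (S - τ) • u) :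
    S * (F q - F xs) + L / 2 * ‖z + τ • (q - y) - xs‖ ^ 2
      ≤ (S - τ) * (F u - F xs) + L / 2 * ‖z - xs‖ ^ 2 := by
  have h1 := mul_le_mul_of_nonneg_left (hF xs) hτ.le
  have h2 := mul_le_mul_of_nonneg_left (hF u) (sub_nonneg.2 hS)
  have e1 : τ * ⟪y - xs, q - y⟫ + (S - τ) * ⟪y - u, q - y⟫ = τ * ⟪z - xs, q - y⟫ := by
    rw [← real_inner_smul_left, ← real_inner_smul_left, ← real_inner_smul_left, ← inner_add_left]
    congr 1
    have : τ • (y - xs) + (S - τ) • (y - u) = S • y - (S - τ) • u - τ • xs := by module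
    rw [this, hz]
    module
  have e2 : ‖z + τ • (q - y) - xs‖ ^ 2
      = ‖z - xs‖ ^ 2 + 2 * (τ * ⟪z - xs, q - y⟫) + τ ^ 2 * ‖q - y‖ ^ 2 := by
    have : z + τ • (q - y) - xs = (z - xs) + τ • (q - y) := by abel
    rw [this, norm_add_sq_real, inner_smul_right, norm_smul, mul_pow, Real.norm_eq_abs, sq_abs]
  have h3 : 0 ≤ L / 2 * ((S - τ ^ 2) * ‖q - y‖ ^ 2) :=
    mul_nonneg (by positivity) (mul_nonneg (sub_nonneg.2 hτS) (sq_nonneg _))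
  rw [e2]
  linear_combination h1 + h2 + h3 - L * e1

/-- Closed form of `T_i` for FPGM-a. -/
lemma sum_fpgm_a {a : ℝ} (ha : a ≠ 0) (n : ℕ) :
    ∑ l ∈ Finset.range n, ((l : ℝ) + a) / a = (n : ℝ) * ((n : ℝ) + 2 * a - 1) / (2 * a) := by
  induction n with
  | zero => simp
  | succ k ih =>
    rw [Finset.sum_range_succ, ih]
    push_cast
    field_simp
    ring

end

/-- FPGM-a, i.e. GFPGM with t_i = (i+a)/a for a real a ≥ 2, has valid
parameters (t_i > 0 and t_i² ≤ T_i) and satisfies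
F(x_N) − F(x_*) ≤ aLR²/(N(N+2a−1)) for every N ≥ 1. -/
theorem fpgm_a_cost_bound
    {E : Type*} [NormedAddCommGroup E] [InnerProductSpace ℝ E]
    (L : ℝ) (hL : 0 < L)
    (f : E → ℝ) (f' : E → E) (φ : E → ℝ)
    (hf : ConvexOn ℝ Set.univ f)
    (hgrad : ∀ z : E, HasFDerivAt f (innerSL ℝ (f' z)) z)
    (hLip : ∀ u v : E, ‖f' u - f' v‖ ≤ L * ‖u - v‖)
    (hφ : ConvexOn ℝ Set.univ φ)
    (p : E → E)
    (hp : ∀ y : E, IsMinOn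
      (fun z => f y + ⟪f' y, z - y⟫ + L / 2 * ‖z - y‖ ^ 2 + φ z) Set.univ (p y))
    (xs : E) (hxs : IsMinOn (fun z => f z + φ z) Set.univ xs)
    (R : ℝ) (hR0 : 0 ≤ R)
    (a : ℝ) (ha : 2 ≤ a)
    (t T : ℕ → ℝ) (ht : ∀ i, t i = ((i : ℝ) + a) / a)
    (hT : ∀ i, T i = ∑ l ∈ Finset.range (i + 1), t l)
    (x y : ℕ → E)
    (hy0 : y 0 = x 0)
    (hx : ∀ i, x (i + 1) = p (y i))
    (hy : ∀ i, y (i + 1) = x (i + 1)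
        + ((T i - t i) * t (i + 1) / (t i * T (i + 1))) • (x (i + 1) - x i)
        + ((t i ^ 2 - T i) * t (i + 1) / (t i * T (i + 1))) • (x (i + 1) - y i))
    (hR : ‖x 0 - xs‖ ≤ R)
    (N : ℕ) (hN : 1 ≤ N) :
    (∀ i, 0 < t i ∧ t i ^ 2 ≤ T i) ∧
      f (x N) + φ (x N) - (f xs + φ xs)
        ≤ a * L * R ^ 2 / ((N : ℝ) * ((N : ℝ) + 2 * a - 1)) := by
  have ha0 : 0 < a := by linarith
  have hTc : ∀ i, T i = ((i : ℝ) + 1) * ((i : ℝ) + 2 * a) / (2 * a) := by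
    intro i
    rw [hT, Finset.sum_congr rfl (fun l _ => ht l), sum_fpgm_a ha0.ne']
    push_cast
    ring
  have htpos : ∀ i, 0 < t i := by
    intro i
    rw [ht]
    positivity
  have htT : ∀ i, t i ^ 2 ≤ T i := by
    intro i
    have hi : (0 : ℝ) ≤ i := Nat.cast_nonneg i
    -- The difference factors as `i ((a - 2) i + 2a² - 3a) / (2a²)`.
    have : T i - t i ^ 2 = i * ((a - 2) * i + a * (2 * (a - 2) + 1)) / (2 * a ^ 2) := by
      rw [hTc, ht]
      field_simp
      ring
    have h2 : 0 ≤ a - 2 := by linarith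
    have : 0 ≤ T i - t i ^ 2 := by
      rw [this]
      positivity
    linarith
  have hTsucc : ∀ i, T (i + 1) = T i + t (i + 1) := by
    intro i
    rw [hT, hT, Finset.sum_range_succ]
  have hTpos : ∀ i, 0 < T i := fun i => lt_of_lt_of_le (by have := htpos i; positivity) (htT i)
  have htleT : ∀ i, t i ≤ T i := by
    intro i
    cases i with
    | zero => simp [hT]
    | succ k => linarith [hTsucc k, hTpos k]
  refine ⟨fun i => ⟨htpos i, htT i⟩, ?_⟩
  have hF : ∀ i w, f (x (i + 1)) + φ (x (i + 1)) + L / 2 * ‖x (i + 1) - y i‖ ^ 2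
      + L * ⟪y i - w, x (i + 1) - y i⟫ ≤ f w + φ w := by
    intro i w
    rw [hx]
    exact prox_grad_ineq hf hgrad hLip hφ (hp (y i)) w
  have hinv : ∀ i, ∃ z : E, T i • y i = t i • z + (T i - t i) • x i ∧
      (T i - t i) * ((f (x i) + φ (x i)) - (f xs + φ xs)) + L / 2 * ‖z - xs‖ ^ 2
        ≤ L / 2 * R ^ 2 := by
    intro i
    induction i with
    | zero =>
      refine ⟨x 0, ?_, ?_⟩
      · rw [hy0]
        module
      · have h0 : T 0 - t 0 = 0 := by simp [hT]
        rw [h0, zero_mul, zero_add]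
        gcongr
    | succ i ih =>
      obtain ⟨z, hz, hle⟩ := ih
      refine ⟨z + t i • (x (i + 1) - y i), ?_, ?_⟩
      · have h1 := (htpos i).ne'
        have h2 := (hTpos (i + 1)).ne'
        have hz' : z = (T i / t i) • y i - ((T i - t i) / t i) • x i := by
          have : t i • z = T i • y i - (T i - t i) • x i := by
            rw [hz]
            abel
          rw [← inv_smul_smul₀ h1 z, this, smul_sub, smul_smul, smul_smul]
          congr 2 <;> ring
        rw [hy, hz']
        match_scalars <;> field_simp <;> ring
      · have := gfpgm_step (F := fun w => f w + φ w) (xs := xs) hL (htpos i) (htleT i) (htT i)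
          (hF i) hz
        have e : T (i + 1) - t (i + 1) = T i := by linarith [hTsucc i]
        rw [e]
        exact this.trans hle
  obtain ⟨n, rfl⟩ : ∃ n, N = n + 1 := ⟨N - 1, by omega⟩
  obtain ⟨z, -, hz⟩ := hinv (n + 1)
  have e : T (n + 1) - t (n + 1) = T n := by linarith [hTsucc n]
  rw [e] at hz
  have hnn : 0 ≤ L / 2 * ‖z - xs‖ ^ 2 := by positivity
  have hbound : a * L * R ^ 2 / (((n + 1 : ℕ) : ℝ) * (((n + 1 : ℕ) : ℝ) + 2 * a - 1))
      = L / 2 * R ^ 2 / T n := by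
    have h1 : (n : ℝ) + 1 ≠ 0 := by positivity
    have h2 : (n : ℝ) + 2 * a ≠ 0 := by positivity
    have h3 : ((n + 1 : ℕ) : ℝ) + 2 * a - 1 = n + 2 * a := by
      push_cast
      ring
    rw [h3, hTc]
    push_cast
    field_simp
  rw [hbound, le_div_iff₀ (hTpos n)]
  linarith
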